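/- arXiv:0707.1588 — 2 statements merged into one kernel-verified Lean document; each statement's English description precedes it below -/
import Mathlib

section
/- Let m > 0, let B and M be positive integers, and let 0 < R < M. With γ_1, …, γ_B i.i.d. with law μ_m and P^ℓ_out(s, R) = Pr( (1/B) Σ_{b=1}^B min(M, log₂(1 + γ_b s)) < R ), one has lim_{s → ∞} −log P^ℓ_out(s, R) / log s = m d_B(R), where d_B(R) = 1 + ⌊B(1 − R/M)⌋ is the Singleton bound. That is, the SNR exponent of the lower bound to the outage probability of the Nakagami-m block-fading channel equals m times the Singleton bound. -/
open MeasureTheory ProbabilityTheory Real Filter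

/-- Density of the Nakagami-m fading power gain (Gamma distribution, shape m, rate m). -/
noncomputable def fgamma (m x : ℝ) : ℝ :=
  if 0 ≤ x then m ^ m * x ^ (m - 1) * Real.exp (-(m * x)) / Real.Gamma m else 0

/-- The Nakagami-m fading power gain law μ_m. -/
noncomputable def muN (m : ℝ) : Measure ℝ :=
  MeasureTheory.volume.withDensity fun x => ENNReal.ofReal (fgamma m x)

/-- CDF of μ_m. -/
noncomputable def Fgamma (m x : ℝ) : ℝ := ∫ t in (0:ℝ)..x, fgamma m t

/-- Law of A(s) = log₂(1+γs) for γ ∼ μ_m conditioned on {γ ≤ (2^M-1)/s}. -/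
noncomputable def nuA (m : ℝ) (M : ℕ) (s : ℝ) : Measure ℝ :=
  Measure.map (fun x => Real.logb 2 (1 + x * s))
    ((muN m)[|{x : ℝ | x ≤ ((2:ℝ) ^ M - 1) / s}])


/-- The lower bound to the outage probability. -/
noncomputable def PoutL (m : ℝ) (B M : ℕ) (s R : ℝ) : ℝ :=
  ((Measure.pi fun _ : Fin B => muN m)
    {γ : Fin B → ℝ |
      (1 / (B : ℝ)) * ∑ b, min (M : ℝ) (Real.logb 2 (1 + γ b * s)) < R}).toReal


lemma muN_eq_gamma (m : ℝ) : muN m = gammaMeasure m m := by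
  unfold muN gammaMeasure
  congr 1
  funext x
  unfold fgamma gammaPDF gammaPDFReal
  congr 1
  split_ifs
  · ring
  · rfl

lemma muN_prob (m : ℝ) (hm : 0 < m) : IsProbabilityMeasure (muN m) := by
  rw [muN_eq_gamma]
  exact isProbabilityMeasure_gammaMeasure hm hm

lemma muN_pos_ae (m : ℝ) : muN m (Set.Iic 0) = 0 := by
  unfold muN
  rw [withDensity_apply _ measurableSet_Iic, ← setLIntegral_congr Iio_ae_eq_Iic]
  rw [setLIntegral_congr_fun (g := fun _ => 0) measurableSet_Iio]
  · simp
  · intro x hx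
    have : ¬ (0:ℝ) ≤ x := not_le.mpr hx
    simp [fgamma, this]

lemma lint_rpow (m : ℝ) (hm : 0 < m) (C : ℝ) (hC : 0 ≤ C) (t : ℝ) (ht : 0 < t) :
    ∫⁻ x in Set.Ioc 0 t, ENNReal.ofReal (C * x ^ (m - 1)) = ENNReal.ofReal (C / m * t ^ m) := by
  have hi : IntervalIntegrable (fun x : ℝ => C * x ^ (m - 1)) volume 0 t :=
    (intervalIntegral.intervalIntegrable_rpow' (by linarith)).const_mul C
  rw [← ofReal_integral_eq_lintegral_ofReal]
  · rw [← intervalIntegral.integral_of_le ht.le, intervalIntegral.integral_const_mul,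
      integral_rpow (Or.inl (by linarith))]
    congr 1
    rw [sub_add_cancel, Real.zero_rpow hm.ne']
    ring
  · exact (intervalIntegrable_iff_integrableOn_Ioc_of_le ht.le).mp hi
  · filter_upwards [ae_restrict_mem measurableSet_Ioc] with x hx
    have := hx.1.le
    simp only [Pi.zero_apply]
    positivity

lemma muN_upper (m : ℝ) (hm : 0 < m) : ∃ K : ℝ, 0 < K ∧ ∀ t : ℝ, 0 < t →
    muN m (Set.Iic t) ≤ ENNReal.ofReal (K * t ^ m) := by
  have hG := Real.Gamma_pos_of_pos hm
  have hmm := Real.rpow_pos_of_pos hm m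
  refine ⟨m ^ m / Real.Gamma m / m, by positivity, fun t ht => ?_⟩
  have h1 : muN m (Set.Iic t) ≤ muN m (Set.Ioc 0 t) := by
    rw [← Set.Iic_union_Ioc_eq_Iic ht.le]
    refine (measure_union_le _ _).trans ?_
    rw [muN_pos_ae, zero_add]
  refine h1.trans ?_
  rw [← lint_rpow m hm _ (by positivity) t ht]
  unfold muN
  rw [withDensity_apply _ measurableSet_Ioc]
  refine setLIntegral_mono' measurableSet_Ioc fun x hx => ?_
  apply ENNReal.ofReal_le_ofReal
  have hx0 : 0 < x := hx.1
  rw [fgamma, if_pos hx0.le]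
  have he : Real.exp (-(m * x)) ≤ 1 := Real.exp_le_one_iff.mpr (by nlinarith)
  have hp : 0 ≤ m ^ m / Real.Gamma m * x ^ (m - 1) := by positivity
  calc m ^ m * x ^ (m - 1) * Real.exp (-(m * x)) / Real.Gamma m
      = m ^ m / Real.Gamma m * x ^ (m - 1) * Real.exp (-(m * x)) := by ring
    _ ≤ _ := mul_le_of_le_one_right hp he

lemma muN_lower (m : ℝ) (hm : 0 < m) (T : ℝ) : ∃ K : ℝ, 0 < K ∧ ∀ t : ℝ, 0 < t → t ≤ T →
    ENNReal.ofReal (K * t ^ m) ≤ muN m (Set.Ioc 0 t) := by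
  have hG := Real.Gamma_pos_of_pos hm
  have hmm := Real.rpow_pos_of_pos hm m
  refine ⟨m ^ m / Real.Gamma m * Real.exp (-(m * T)) / m, by positivity, fun t ht htT => ?_⟩
  rw [← lint_rpow m hm _ (by positivity) t ht]
  unfold muN
  rw [withDensity_apply _ measurableSet_Ioc]
  refine setLIntegral_mono' measurableSet_Ioc fun x hx => ?_
  apply ENNReal.ofReal_le_ofReal
  have hx0 : 0 < x := hx.1
  rw [fgamma, if_pos hx0.le]
  have he : Real.exp (-(m * T)) ≤ Real.exp (-(m * x)) :=
    Real.exp_le_exp.mpr (by nlinarith [hx.2])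
  have hp : 0 ≤ m ^ m / Real.Gamma m * x ^ (m - 1) := by positivity
  calc m ^ m / Real.Gamma m * Real.exp (-(m * T)) * x ^ (m - 1)
      = m ^ m / Real.Gamma m * x ^ (m - 1) * Real.exp (-(m * T)) := by ring
    _ ≤ m ^ m / Real.Gamma m * x ^ (m - 1) * Real.exp (-(m * x)) :=
        mul_le_mul_of_nonneg_left he hp
    _ = _ := by ring

lemma pi_box (μ : Measure ℝ) [IsProbabilityMeasure μ] (B : ℕ) (S : Finset (Fin B)) (A : Set ℝ) :
    (Measure.pi fun _ : Fin B => μ) (Set.univ.pi fun b => if b ∈ S then A else Set.univ)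
      = μ A ^ S.card := by
  rw [Measure.pi_pi]
  have : ∀ b : Fin B, μ (if b ∈ S then A else Set.univ) = if b ∈ S then μ A else 1 := by
    intro b
    split_ifs <;> simp
  simp only [this]
  rw [Finset.prod_ite_mem, Finset.univ_inter, Finset.prod_const]

lemma pout_upper (m : ℝ) (hm : 0 < m) (B M : ℕ) (hB : 0 < B) (hM : 0 < M)
    (R : ℝ)
    (d : ℕ) (hd : (d : ℤ) = 1 + ⌊(B : ℝ) * (1 - R / (M : ℝ))⌋) (s : ℝ) (hs : 0 < s) :
    (Measure.pi fun _ : Fin B => muN m)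
    {γ : Fin B → ℝ |
      (1 / (B : ℝ)) * ∑ b, min (M : ℝ) (Real.logb 2 (1 + γ b * s)) < R} ≤
      (B.choose d : ENNReal) * muN m (Set.Iic ((2:ℝ) ^ M / s)) ^ d := by
  haveI := muN_prob m hm
  have hBr : (0:ℝ) < B := by exact_mod_cast hB
  have hMr : (0:ℝ) < M := by exact_mod_cast hM
  set t : ℝ := (2:ℝ) ^ M / s with ht
  have hae : ∀ᵐ γ ∂(Measure.pi fun _ : Fin B => muN m), ∀ b, 0 < γ b := by
    rw [ae_all_iff]
    intro b
    have := Measure.pi_eval_preimage_null (fun _ : Fin B => muN m) (i := b) (muN_pos_ae m)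
    rw [ae_iff]
    convert this using 2
    ext γ
    simp
  have hsub : (Measure.pi fun _ : Fin B => muN m)
    {γ : Fin B → ℝ |
      (1 / (B : ℝ)) * ∑ b, min (M : ℝ) (Real.logb 2 (1 + γ b * s)) < R} ≤
      (Measure.pi fun _ : Fin B => muN m)
      (⋃ S ∈ Finset.powersetCard d (Finset.univ : Finset (Fin B)),
        Set.univ.pi fun b => if b ∈ S then Set.Iic t else Set.univ) := by
    apply measure_mono_ae
    filter_upwards [hae] with γ hpos hγ
    have hγ' : (1 / (B : ℝ)) * ∑ b, min (M : ℝ) (Real.logb 2 (1 + γ b * s)) < R := hγ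
    set S : Finset (Fin B) := Finset.univ.filter (fun b => γ b ≤ t) with hS
    have hsum : ((B:ℝ) - S.card) * M ≤ ∑ b, min (M : ℝ) (Real.logb 2 (1 + γ b * s)) := by
      have h1 : ∑ b : Fin B, ((M:ℝ) - if γ b ≤ t then (M:ℝ) else 0) = ((B:ℝ) - S.card) * M := by
        rw [Finset.sum_sub_distrib, ← Finset.sum_filter, Finset.sum_const, Finset.sum_const]
        simp
        ring
      rw [← h1]
      refine Finset.sum_le_sum fun b _ => ?_
      have hb := hpos b
      have hbs : 0 < γ b * s := by positivity
      split_ifs with h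
      · rw [sub_self]
        exact le_min hMr.le (Real.logb_nonneg (by norm_num) (by linarith))
      · rw [sub_zero]
        refine le_min le_rfl ?_
        rw [Real.le_logb_iff_rpow_le (by norm_num) (by linarith), Real.rpow_natCast]
        have : (2:ℝ) ^ M < γ b * s := (div_lt_iff₀ hs).mp (not_le.mp h)
        linarith
    have hlt : ((B:ℝ) - S.card) * M < R * B := by
      rw [one_div, inv_mul_lt_iff₀ hBr] at hγ'
      linarith
    have hcard : d ≤ S.card := by
      have : (B : ℝ) * (1 - R / (M : ℝ)) < (S.card : ℤ) := by
        have h2 : (B : ℝ) * (1 - R / (M : ℝ)) = B - R * B / M := by ring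
        have h3 : (B:ℝ) - S.card < R * B / M := by rwa [lt_div_iff₀ hMr]
        rw [h2]
        push_cast
        linarith
      have := Int.floor_lt.mpr this
      omega
    obtain ⟨U, hUS, hUc⟩ := Finset.exists_subset_card_eq hcard
    show γ ∈ (⋃ S ∈ Finset.powersetCard d (Finset.univ : Finset (Fin B)),
        Set.univ.pi fun b => if b ∈ S then Set.Iic t else Set.univ)
    simp only [Set.mem_iUnion]
    refine ⟨U, Finset.mem_powersetCard.mpr ⟨Finset.subset_univ _, hUc⟩, fun b _ => ?_⟩
    show γ b ∈ if b ∈ U then Set.Iic t else Set.univ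
    split_ifs with hb
    · exact (Finset.mem_filter.mp (hUS hb)).2
    · trivial
  refine hsub.trans ((measure_biUnion_finset_le _ _).trans ?_)
  rw [Finset.sum_congr rfl (g := fun _ => muN m (Set.Iic t) ^ d)]
  · simp
  · intro S hS
    rw [pi_box, (Finset.mem_powersetCard.mp hS).2]

lemma pout_lower (m : ℝ) (hm : 0 < m) (B M : ℕ) (hB : 0 < B) (hM : 0 < M)
    (R : ℝ) (hR0 : 0 < R)
    (d : ℕ) (hd : (d : ℤ) = 1 + ⌊(B : ℝ) * (1 - R / (M : ℝ))⌋) :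
    ∃ a : ℝ, 0 < a ∧ ∀ s : ℝ, 0 < s → muN m (Set.Ioc 0 (a / s)) ^ d ≤
    (Measure.pi fun _ : Fin B => muN m)
    {γ : Fin B → ℝ |
      (1 / (B : ℝ)) * ∑ b, min (M : ℝ) (Real.logb 2 (1 + γ b * s)) < R} := by
  haveI := muN_prob m hm
  have hBr : (0:ℝ) < B := by exact_mod_cast hB
  have hMr : (0:ℝ) < M := by exact_mod_cast hM
  have h2 : (B : ℝ) * (1 - R / (M : ℝ)) = B - R * B / M := by ring
  have hgap : ((B:ℝ) - d) * M < R * B := by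
    have h := Int.lt_floor_add_one ((B : ℝ) * (1 - R / (M : ℝ)))
    have hd' : (d:ℝ) = 1 + (⌊(B : ℝ) * (1 - R / (M : ℝ))⌋ : ℝ) := by exact_mod_cast hd
    rw [← lt_div_iff₀ hMr]
    linarith
  have hdB : d ≤ B := by
    have : ⌊(B : ℝ) * (1 - R / (M : ℝ))⌋ < (B : ℤ) := by
      rw [Int.floor_lt, h2]
      have : 0 < R * B / M := by positivity
      push_cast
      linarith
    omega
  obtain ⟨S, -, hSc⟩ := Finset.exists_subset_card_eq (s := (Finset.univ : Finset (Fin B))) (n := d)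
    (by simpa using hdB)
  set ε : ℝ := (R * B - ((B:ℝ) - d) * M) / (2 * B) with hε
  have hε0 : 0 < ε := by
    have : 0 < R * B - ((B:ℝ) - d) * M := by linarith
    positivity
  have hεB : ε * B * 2 = R * B - ((B:ℝ) - d) * M := by
    rw [hε]; field_simp
  refine ⟨2 ^ ε - 1, by linarith [Real.one_lt_rpow (by norm_num : (1:ℝ) < 2) hε0], fun s hs => ?_⟩
  rw [← hSc, ← pi_box]
  refine measure_mono fun γ hγ => ?_
  show (1 / (B : ℝ)) * ∑ b, min (M : ℝ) (Real.logb 2 (1 + γ b * s)) < R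
  rw [one_div, inv_mul_lt_iff₀ hBr]
  have hsum : ∑ b, min (M : ℝ) (Real.logb 2 (1 + γ b * s)) ≤
      ∑ b : Fin B, (((M:ℝ) - if b ∈ S then (M:ℝ) else 0) + ε) := by
    refine Finset.sum_le_sum fun b _ => ?_
    have hb := hγ b (Set.mem_univ b)
    simp only at hb
    split_ifs with h
    · rw [if_pos h] at hb
      rw [sub_self, zero_add]
      refine (min_le_right _ _).trans ?_
      have hb1 := hb.1
      have hbs : 0 < γ b * s := by positivity
      rw [Real.logb_le_iff_le_rpow (by norm_num) (by linarith)]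
      have := (le_div_iff₀ hs).mp hb.2
      linarith
    · have := min_le_left (M:ℝ) (Real.logb 2 (1 + γ b * s))
      linarith
  have h1 : ∑ b : Fin B, (((M:ℝ) - if b ∈ S then (M:ℝ) else 0) + ε)
      = ((B:ℝ) - d) * M + B * ε := by
    rw [Finset.sum_add_distrib, Finset.sum_sub_distrib, Finset.sum_ite_mem, Finset.univ_inter,
      Finset.sum_const, Finset.sum_const, Finset.sum_const, hSc]
    simp
    ring
  rw [h1] at hsum
  have : 0 < ε * B := by positivity
  linarith

lemma rpow_aux (K a s m : ℝ) (ha : 0 < a) (hs : 0 < s) (d : ℕ) :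
    (K * (a / s) ^ m) ^ d = (K * a ^ m) ^ d * s ^ (-(m * d)) := by
  rw [Real.div_rpow ha.le hs.le, Real.rpow_neg hs.le, Real.rpow_mul hs.le, Real.rpow_natCast,
    ← mul_div_assoc, div_pow, div_eq_mul_inv]

/-- the SNR exponent of the lower bound to the outage probability equals
m times the Singleton bound d_B(R) = 1 + ⌊B(1 - R/M)⌋. -/
theorem stmt_7 (m : ℝ) (hm : 0 < m) (B M : ℕ) (hB : 0 < B) (hM : 0 < M)
    (R : ℝ) (hR0 : 0 < R) (hRM : R < (M : ℝ))
    (d : ℕ) (hd : (d : ℤ) = 1 + ⌊(B : ℝ) * (1 - R / (M : ℝ))⌋) :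
    Filter.Tendsto (fun s : ℝ => -Real.log (PoutL m B M s R) / Real.log s)
      Filter.atTop (nhds (m * (d : ℝ))) := by
  haveI := muN_prob m hm
  obtain ⟨K, hK, hup⟩ := muN_upper m hm
  obtain ⟨a, ha, hlow⟩ := pout_lower m hm B M hB hM R hR0 d hd
  obtain ⟨k, hk, hkl⟩ := muN_lower m hm a
  obtain ⟨c, hc, hcl⟩ : ∃ c : ℝ, 0 < c ∧ ∀ s : ℝ, 1 < s →
      c * s ^ (-(m * d)) ≤ PoutL m B M s R := by
    refine ⟨(k * a ^ m) ^ d, by positivity, fun s hs => ?_⟩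
    have hs0 : 0 < s := by linarith
    rw [← rpow_aux k a s m ha hs0 d]
    unfold PoutL
    rw [← ENNReal.ofReal_le_iff_le_toReal (measure_ne_top _ _), ENNReal.ofReal_pow (by positivity)]
    refine le_trans ?_ (hlow s hs0)
    gcongr
    exact hkl _ (by positivity) (div_le_self ha.le hs.le)
  obtain ⟨C, hC⟩ : ∃ C : ℝ, ∀ s : ℝ, 1 < s →
      PoutL m B M s R ≤ C * s ^ (-(m * d)) := by
    refine ⟨B.choose d * (K * ((2:ℝ) ^ M) ^ m) ^ d, fun s hs => ?_⟩
    have hs0 : 0 < s := by linarith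
    rw [mul_assoc, ← rpow_aux K _ s m (by positivity) hs0 d]
    unfold PoutL
    refine ENNReal.toReal_le_of_le_ofReal (by positivity) ?_
    rw [ENNReal.ofReal_mul (by positivity), ENNReal.ofReal_pow (by positivity),
      ENNReal.ofReal_natCast]
    refine (pout_upper m hm B M hB hM R d hd s hs0).trans ?_
    gcongr
    exact hup _ (by positivity)
  have hC0 : 0 < C := by
    have h := (hcl 2 (by norm_num)).trans (hC 2 (by norm_num))
    have h2 : (0:ℝ) < 2 ^ (-(m * d)) := by positivity
    exact lt_of_lt_of_le hc (le_of_mul_le_mul_right h h2)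
  have hlim : ∀ y : ℝ, Tendsto (fun s : ℝ => m * d - Real.log y / Real.log s) atTop
      (nhds (m * (d:ℝ))) := by
    intro y
    have := (tendsto_const_nhds (x := Real.log y)).div_atTop Real.tendsto_log_atTop
    simpa using (tendsto_const_nhds (x := m * (d:ℝ))).sub this
  refine tendsto_of_tendsto_of_tendsto_of_le_of_le' (hlim C) (hlim c) ?_ ?_
  all_goals
    filter_upwards [eventually_gt_atTop 1] with s hs
    have hs0 : 0 < s := by linarith
    have hl : 0 < Real.log s := Real.log_pos hs
    have hsp : 0 < s ^ (-(m * d)) := by positivity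
    have hP : 0 < PoutL m B M s R := lt_of_lt_of_le (by positivity) (hcl s hs)
    have e1 := Real.log_le_log (by positivity) (hcl s hs)
    have e2 := Real.log_le_log hP (hC s hs)
    rw [Real.log_mul (by positivity) (by positivity), Real.log_rpow hs0] at e1 e2
  · rw [le_div_iff₀ hl, sub_mul, div_mul_cancel₀ _ hl.ne']
    linarith
  · rw [div_le_iff₀ hl, sub_mul, div_mul_cancel₀ _ hl.ne']
    linarith
end

section
/- Let m > 0, let M be a positive integer, let n be a positive integer, and let y ∈ ℝ. For s > 0 let ν_s denote the law of A(s) (the law of log₂(1 + γ s) for γ ∼ μ_m conditioned on {γ ≤ (2^M − 1)/s}), and let ν̄ denote the probability measure on ℝ with density f_Ā(ξ) = m (2^ξ − 1)^{m−1} 2^ξ ln 2 / (2^M − 1)^m on [0, M] and 0 otherwise. Then lim_{s → ∞} ν_s^{⊗n}( { a ∈ ℝ^n : Σ_{k=1}^n a_k < y } ) = ν̄^{⊗n}( { a ∈ ℝ^n : Σ_{k=1}^n a_k < y } ); that is, the cumulative distribution function of the sum of n i.i.d. copies of A(s) converges pointwise to that of the sum of n i.i.d. copies of the limiting random variable Ā.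 -/
open MeasureTheory ProbabilityTheory Real Filter

/-- The limiting density f_Ā. -/
noncomputable def fAbar (m : ℝ) (M : ℕ) (ξ : ℝ) : ℝ :=
  if 0 ≤ ξ ∧ ξ ≤ (M : ℝ) then
    m * ((2:ℝ) ^ ξ - 1) ^ (m - 1) * (2:ℝ) ^ ξ * Real.log 2 / ((2:ℝ) ^ M - 1) ^ m
  else 0

/-- The law of the limiting random variable Ā. -/
noncomputable def nuAbar (m : ℝ) (M : ℕ) : Measure ℝ :=
  MeasureTheory.volume.withDensity fun ξ => ENNReal.ofReal (fAbar m M ξ)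

lemma aux_pi_le {n : ℕ} (μ ν : Measure ℝ) [IsFiniteMeasure μ] [IsFiniteMeasure ν]
    (c : ENNReal) (hc : c ≠ ⊤) (h : μ ≤ c • ν) (S : Set (Fin n → ℝ)) (hS : MeasurableSet S) :
    (Measure.pi fun _ : Fin n => μ) S ≤ c ^ n * (Measure.pi fun _ : Fin n => ν) S := by
  have : IsFiniteMeasure (c • ν) := Measure.smul_finite ν hc
  have h1 : (Measure.pi fun _ : Fin n => c • ν) = c ^ n • Measure.pi fun _ : Fin n => ν := by
    refine Measure.pi_eq fun s hs => ?_
    simp [Measure.smul_apply, Measure.pi_pi, Finset.prod_mul_distrib]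
  have h2 : (Measure.pi fun _ : Fin n => μ) S ≤ (Measure.pi fun _ : Fin n => c • ν) S := by
    have h3 : (Measure.pi fun _ : Fin n => μ).toOuterMeasure ≤
        OuterMeasure.pi fun _ : Fin n => (c • ν).toOuterMeasure := by
      rw [OuterMeasure.le_pi]
      intro s hs
      show (Measure.pi fun _ : Fin n => μ) _ ≤ _
      rw [Measure.pi_pi]
      exact Finset.prod_le_prod' fun i _ => h (s i)
    have h4 := h3 S
    rw [Measure.pi_def (μ := fun _ : Fin n => c • ν), toMeasure_apply _ _ hS]
    exact h4
  rw [h1] at h2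
  simpa using h2

lemma aux_C_pos (M : ℕ) (hM : 0 < M) : 0 < (2:ℝ) ^ M - 1 := by
  have : (1:ℝ) < 2 ^ M := one_lt_pow₀ (by norm_num) hM.ne'
  linarith

lemma aux_fAbar_nonneg (m : ℝ) (hm : 0 < m) (M : ℕ) (ξ : ℝ) : 0 ≤ fAbar m M ξ := by
  unfold fAbar
  split_ifs with h
  · have h1 : (1:ℝ) ≤ 2 ^ ξ := Real.one_le_rpow (by norm_num) h.1
    have h2 : (1:ℝ) ≤ 2 ^ M := one_le_pow₀ (by norm_num)
    have h3 : 0 ≤ (2:ℝ) ^ ξ - 1 := by linarith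
    have h4 : 0 ≤ (2:ℝ) ^ M - 1 := by linarith
    have := Real.log_nonneg (show (1:ℝ) ≤ 2 by norm_num)
    positivity
  · exact le_rfl

lemma aux_fAbar_meas (m : ℝ) (M : ℕ) : Measurable (fAbar m M) := by
  unfold fAbar
  refine Measurable.ite ?_ ?_ measurable_const
  · exact measurableSet_Icc
  · fun_prop

lemma aux_nuAbar (m : ℝ) (M : ℕ) (B : Set ℝ) (hB : MeasurableSet B) :
    nuAbar m M B = ∫⁻ ξ in Set.Icc (0:ℝ) M ∩ B, ENNReal.ofReal (fAbar m M ξ) := by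
  unfold nuAbar
  rw [withDensity_apply _ hB, ← lintegral_indicator hB,
    ← lintegral_indicator (measurableSet_Icc.inter hB)]
  congr 1
  ext ξ
  by_cases h1 : ξ ∈ B <;> by_cases h2 : ξ ∈ Set.Icc (0:ℝ) M
  · simp [Set.indicator, h1, h2]
  · have : fAbar m M ξ = 0 := by unfold fAbar; rw [if_neg]; exact h2
    simp [Set.indicator, this]
  · simp [Set.indicator, h1]
  · simp [Set.indicator, h1]

lemma aux_nuAbar_univ (m : ℝ) (hm : 0 < m) (M : ℕ) (hM : 0 < M) :
    nuAbar m M Set.univ = 1 := by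
  have hC := aux_C_pos M hM
  rw [aux_nuAbar _ _ _ MeasurableSet.univ, Set.inter_univ]
  have hM' : (0:ℝ) ≤ M := by positivity
  set G : ℝ → ℝ := fun ξ => ((2:ℝ) ^ ξ - 1) ^ m / ((2:ℝ) ^ M - 1) ^ m with hG
  have hcont : ContinuousOn G (Set.Icc 0 M) := by
    apply Continuous.continuousOn
    apply Continuous.div_const
    apply Continuous.rpow_const
    · exact (Real.continuous_const_rpow (by norm_num)).sub continuous_const
    · intro x; right; exact hm.le
  have hder : ∀ x ∈ Set.Ioo (0:ℝ) M, HasDerivAt G (fAbar m M x) x := by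
    intro x hx
    have h1 : (1:ℝ) < 2 ^ x := Real.one_lt_rpow (by norm_num) hx.1
    have h2 : HasDerivAt (fun ξ : ℝ => (2:ℝ) ^ ξ - 1) (Real.log 2 * 1 * 2 ^ x) x := by
      exact ((hasDerivAt_id x).const_rpow (by norm_num : (0:ℝ) < 2)).sub_const 1
    have h3 := (h2.rpow_const (p := m) (Or.inl (by linarith))).div_const (((2:ℝ) ^ M - 1) ^ m)
    have h4 : fAbar m M x = Real.log 2 * 1 * 2 ^ x * m * ((2:ℝ) ^ x - 1) ^ (m - 1) /
        ((2:ℝ) ^ M - 1) ^ m := by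
      unfold fAbar
      rw [if_pos ⟨hx.1.le, hx.2.le⟩]
      ring
    rw [h4]
    exact h3
  have hint := intervalIntegral.integrableOn_deriv_of_nonneg hcont hder
    (fun x _ => aux_fAbar_nonneg m hm M x)
  have hftc := intervalIntegral.integral_eq_sub_of_hasDerivAt_of_le hM' hcont hder
    ((intervalIntegrable_iff_integrableOn_Ioc_of_le hM').2 hint)
  rw [setLIntegral_congr Ioc_ae_eq_Icc.symm, ← ofReal_integral_eq_lintegral_ofReal hint
    (Eventually.of_forall fun x => aux_fAbar_nonneg m hm M x),
    ← intervalIntegral.integral_of_le hM', hftc]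
  have : ((2:ℝ) ^ M - 1) ^ m ≠ 0 := (Real.rpow_pos_of_pos hC m).ne'
  simp [hG, Real.zero_rpow hm.ne', div_self this]

lemma aux_image (M : ℕ) (s : ℝ) (hs : 0 < s) (B : Set ℝ) :
    (fun ξ : ℝ => ((2:ℝ) ^ ξ - 1) / s) '' (Set.Icc (0:ℝ) M ∩ B) =
      ({x : ℝ | x ≤ ((2:ℝ) ^ M - 1) / s} ∩
        (fun x => Real.logb 2 (1 + x * s)) ⁻¹' B) ∩ Set.Ici 0 := by
  ext x
  constructor
  · rintro ⟨ξ, ⟨⟨h0, h1⟩, hB⟩, rfl⟩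
    have e1 : (1:ℝ) ≤ 2 ^ ξ := Real.one_le_rpow (by norm_num) h0
    have e2 : (2:ℝ) ^ ξ ≤ 2 ^ M := by
      rw [← Real.rpow_natCast]
      exact Real.rpow_le_rpow_of_exponent_le (by norm_num) h1
    refine ⟨⟨?_, ?_⟩, ?_⟩
    · show _ / s ≤ _ / s
      gcongr
    · show Real.logb 2 (1 + ((2:ℝ) ^ ξ - 1) / s * s) ∈ B
      rw [div_mul_cancel₀ _ hs.ne', add_sub_cancel, Real.logb_rpow (by norm_num) (by norm_num)]
      exact hB
    · exact div_nonneg (by linarith) hs.le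
  · rintro ⟨⟨h1, hB⟩, h0⟩
    have h0' : 0 ≤ x := h0
    have h1' : x * s ≤ (2:ℝ) ^ M - 1 := (le_div_iff₀ hs).1 h1
    have hxs : 0 ≤ x * s := by positivity
    refine ⟨Real.logb 2 (1 + x * s), ⟨⟨?_, ?_⟩, hB⟩, ?_⟩
    · exact Real.logb_nonneg (by norm_num) (by linarith)
    · rw [Real.logb_le_iff_le_rpow (by norm_num) (by linarith), Real.rpow_natCast]
      linarith
    · show ((2:ℝ) ^ (Real.logb 2 (1 + x * s)) - 1) / s = x
      rw [Real.rpow_logb (by norm_num) (by norm_num) (by linarith)]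
      field_simp
      ring

lemma aux_T_meas (s : ℝ) : Measurable (fun x : ℝ => Real.logb 2 (1 + x * s)) := by
  unfold Real.logb
  fun_prop

lemma aux_muN (m : ℝ) (M : ℕ) (s : ℝ) (hs : 0 < s) (B : Set ℝ) (hB : MeasurableSet B) :
    muN m ({x : ℝ | x ≤ ((2:ℝ) ^ M - 1) / s} ∩
        (fun x => Real.logb 2 (1 + x * s)) ⁻¹' B) =
      ∫⁻ ξ in Set.Icc (0:ℝ) M ∩ B, ENNReal.ofReal |Real.log 2 * 2 ^ ξ / s| *
        ENNReal.ofReal (fgamma m (((2:ℝ) ^ ξ - 1) / s)) := by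
  have hmeas : MeasurableSet ({x : ℝ | x ≤ ((2:ℝ) ^ M - 1) / s} ∩
        (fun x => Real.logb 2 (1 + x * s)) ⁻¹' B) :=
    measurableSet_Iic.inter (aux_T_meas s hB)
  rw [← lintegral_image_eq_lintegral_abs_deriv_mul
    (f := fun ξ : ℝ => ((2:ℝ) ^ ξ - 1) / s) (f' := fun ξ => Real.log 2 * 2 ^ ξ / s)
    (measurableSet_Icc.inter hB) _ _ (fun x => ENNReal.ofReal (fgamma m x)), aux_image M s hs B]
  · unfold muN
    rw [withDensity_apply _ hmeas, ← lintegral_indicator hmeas,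
      ← lintegral_indicator (hmeas.inter measurableSet_Ici)]
    congr 1
    ext x
    by_cases h : 0 ≤ x
    · have h' : x ∈ Set.Ici (0:ℝ) := h
      by_cases hx : x ∈ {x : ℝ | x ≤ ((2:ℝ) ^ M - 1) / s} ∩
        (fun x => Real.logb 2 (1 + x * s)) ⁻¹' B
      · rw [Set.indicator_of_mem hx, Set.indicator_of_mem (Set.mem_inter hx h')]
      · rw [Set.indicator_of_notMem hx, Set.indicator_of_notMem (fun hh => hx hh.1)]
    · simp [Set.indicator, h, fgamma]
  · intro x _
    have := (((hasDerivAt_id x).const_rpow (by norm_num : (0:ℝ) < 2)).sub_const 1).div_const s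
    simp only [id, mul_one] at this
    exact this.hasDerivWithinAt
  · intro a _ b _ hab
    have h1 : (2:ℝ) ^ a = 2 ^ b := by
      have h2 : ((2:ℝ) ^ a - 1) / s = ((2:ℝ) ^ b - 1) / s := hab
      rw [div_left_inj' hs.ne'] at h2
      linarith
    exact (Real.rpow_right_inj (by norm_num) (by norm_num)).1 h1

/-- normalising constant -/
noncomputable def auxK (m : ℝ) (M : ℕ) (s : ℝ) : ℝ :=
  m ^ m * ((2:ℝ) ^ M - 1) ^ m / (Real.Gamma m * s ^ (m - 1) * s * m)

lemma auxK_pos (m : ℝ) (hm : 0 < m) (M : ℕ) (hM : 0 < M) (s : ℝ) (hs : 0 < s) :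
    0 < auxK m M s := by
  have hC := aux_C_pos M hM
  have := Real.Gamma_pos_of_pos hm
  unfold auxK
  positivity

lemma aux_density (m : ℝ) (hm : 0 < m) (M : ℕ) (hM : 0 < M) (s : ℝ) (hs : 0 < s)
    (ξ : ℝ) (hξ : ξ ∈ Set.Icc (0:ℝ) M) :
    |Real.log 2 * 2 ^ ξ / s| * fgamma m (((2:ℝ) ^ ξ - 1) / s) =
      auxK m M s * Real.exp (-(m * (((2:ℝ) ^ ξ - 1) / s))) * fAbar m M ξ := by
  have hC := aux_C_pos M hM
  have hG := (Real.Gamma_pos_of_pos hm).ne'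
  have h1 : (1:ℝ) ≤ 2 ^ ξ := Real.one_le_rpow (by norm_num) hξ.1
  have h3 : 0 ≤ (2:ℝ) ^ ξ - 1 := by linarith
  have hl := Real.log_nonneg (show (1:ℝ) ≤ 2 by norm_num)
  have hCm := (Real.rpow_pos_of_pos hC m).ne'
  have hsm := (Real.rpow_pos_of_pos hs (m-1)).ne'
  rw [abs_of_nonneg (by positivity)]
  unfold fgamma fAbar auxK
  rw [if_pos (by positivity), if_pos ⟨hξ.1, hξ.2⟩, Real.div_rpow h3 hs.le]
  generalize Real.exp _ = E
  generalize ((2:ℝ) ^ ξ - 1) ^ (m-1) = F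
  field_simp

lemma aux_bounds (m : ℝ) (hm : 0 < m) (M : ℕ) (hM : 0 < M) (s : ℝ) (hs : 0 < s)
    (B : Set ℝ) (hB : MeasurableSet B) :
    muN m ({x : ℝ | x ≤ ((2:ℝ) ^ M - 1) / s} ∩
        (fun x => Real.logb 2 (1 + x * s)) ⁻¹' B) ≤
      ENNReal.ofReal (auxK m M s) * nuAbar m M B ∧
    ENNReal.ofReal (auxK m M s) * nuAbar m M B ≤
      ENNReal.ofReal (Real.exp (m * ((2:ℝ) ^ M - 1) / s)) *
      muN m ({x : ℝ | x ≤ ((2:ℝ) ^ M - 1) / s} ∩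
        (fun x => Real.logb 2 (1 + x * s)) ⁻¹' B) := by
  have hK := auxK_pos m hm M hM s hs
  have key : ∀ ξ ∈ Set.Icc (0:ℝ) M, ENNReal.ofReal |Real.log 2 * 2 ^ ξ / s| *
        ENNReal.ofReal (fgamma m (((2:ℝ) ^ ξ - 1) / s)) =
      ENNReal.ofReal
        (auxK m M s * Real.exp (-(m * (((2:ℝ) ^ ξ - 1) / s))) * fAbar m M ξ) := by
    intro ξ hξ
    rw [← ENNReal.ofReal_mul (abs_nonneg _), aux_density m hm M hM s hs ξ hξ]
  rw [aux_muN m M s hs B hB, aux_nuAbar m M B hB,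
    ← lintegral_const_mul' _ _ ENNReal.ofReal_ne_top,
    ← lintegral_const_mul' _ _ ENNReal.ofReal_ne_top]
  constructor
  · refine setLIntegral_mono' (measurableSet_Icc.inter hB) fun ξ hξ => ?_
    rw [key ξ hξ.1, ← ENNReal.ofReal_mul hK.le]
    apply ENNReal.ofReal_le_ofReal
    have h1 : (1:ℝ) ≤ 2 ^ ξ := Real.one_le_rpow (by norm_num) hξ.1.1
    have h2 : 0 ≤ m * (((2:ℝ) ^ ξ - 1) / s) :=
      mul_nonneg hm.le (div_nonneg (by linarith) hs.le)
    have h3 : Real.exp (-(m * (((2:ℝ) ^ ξ - 1) / s))) ≤ 1 := Real.exp_le_one_iff.2 (by linarith)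
    exact mul_le_mul_of_nonneg_right (mul_le_of_le_one_right hK.le h3)
      (aux_fAbar_nonneg m hm M ξ)
  · refine setLIntegral_mono' (measurableSet_Icc.inter hB) fun ξ hξ => ?_
    rw [key ξ hξ.1, ← ENNReal.ofReal_mul hK.le, ← ENNReal.ofReal_mul (Real.exp_pos _).le]
    apply ENNReal.ofReal_le_ofReal
    have e2 : (2:ℝ) ^ ξ ≤ 2 ^ M := by
      rw [← Real.rpow_natCast]
      exact Real.rpow_le_rpow_of_exponent_le (by norm_num) hξ.1.2
    have h2 : m * (((2:ℝ) ^ ξ - 1) / s) ≤ m * ((2:ℝ) ^ M - 1) / s := by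
      rw [← mul_div_assoc]
      gcongr
    have h3 : 1 ≤ Real.exp (m * ((2:ℝ) ^ M - 1) / s) *
        Real.exp (-(m * (((2:ℝ) ^ ξ - 1) / s))) := by
      rw [← Real.exp_add]
      exact Real.one_le_exp (by linarith)
    have h4 := mul_le_mul_of_nonneg_right h3
      (mul_nonneg hK.le (aux_fAbar_nonneg m hm M ξ))
    nlinarith [h4]

lemma aux_nuA (m : ℝ) (M : ℕ) (s : ℝ) (B : Set ℝ) (hB : MeasurableSet B) :
    nuA m M s B = (muN m {x : ℝ | x ≤ ((2:ℝ) ^ M - 1) / s})⁻¹ *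
      muN m ({x : ℝ | x ≤ ((2:ℝ) ^ M - 1) / s} ∩
        (fun x => Real.logb 2 (1 + x * s)) ⁻¹' B) := by
  unfold nuA
  rw [Measure.map_apply (aux_T_meas s) hB]
  exact cond_apply measurableSet_Iic _ _

lemma aux_compare (m : ℝ) (hm : 0 < m) (M : ℕ) (hM : 0 < M) (s : ℝ) (hs : 0 < s) :
    nuA m M s ≤ ENNReal.ofReal (Real.exp (m * ((2:ℝ) ^ M - 1) / s)) • nuAbar m M ∧
    nuAbar m M ≤ ENNReal.ofReal (Real.exp (m * ((2:ℝ) ^ M - 1) / s)) • nuA m M s := by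
  have hK := auxK_pos m hm M hM s hs
  have hu := aux_bounds m hm M hM s hs Set.univ MeasurableSet.univ
  rw [aux_nuAbar_univ m hm M hM, Set.preimage_univ, Set.inter_univ, mul_one] at hu
  have hK0 : ENNReal.ofReal (auxK m M s) ≠ 0 := by simpa using hK
  have hKt : ENNReal.ofReal (auxK m M s) ≠ ⊤ := ENNReal.ofReal_ne_top
  obtain ⟨hu1, hu2⟩ := hu
  set c := ENNReal.ofReal (Real.exp (m * ((2:ℝ) ^ M - 1) / s))
  set K := ENNReal.ofReal (auxK m M s)
  set U := muN m {x : ℝ | x ≤ ((2:ℝ) ^ M - 1) / s} with hU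
  have hUt : U ≠ ⊤ := ne_top_of_le_ne_top hKt hu1
  have hU0 : U ≠ 0 := by
    intro h
    rw [h, mul_zero] at hu2
    exact hK0 (le_zero_iff.1 hu2)
  constructor
  · refine Measure.le_iff.2 fun B hB => ?_
    rw [aux_nuA m M s B hB, ← hU, Measure.smul_apply, smul_eq_mul]
    calc _ ≤ U⁻¹ * (K * nuAbar m M B) := by
          gcongr; exact (aux_bounds m hm M hM s hs B hB).1
      _ ≤ U⁻¹ * (c * U * nuAbar m M B) := by gcongr
      _ = (U⁻¹ * U) * (c * nuAbar m M B) := by ring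
      _ = c * nuAbar m M B := by rw [ENNReal.inv_mul_cancel hU0 hUt, one_mul]
  · refine Measure.le_iff.2 fun B hB => ?_
    rw [Measure.smul_apply, smul_eq_mul, aux_nuA m M s B hB, ← hU]
    have hb := (aux_bounds m hm M hM s hs B hB).2
    calc nuAbar m M B = (U⁻¹ * U) * nuAbar m M B := by
          rw [ENNReal.inv_mul_cancel hU0 hUt, one_mul]
      _ ≤ (U⁻¹ * K) * nuAbar m M B := by gcongr
      _ = U⁻¹ * (K * nuAbar m M B) := by ring
      _ ≤ U⁻¹ * (c * _) := by gcongr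
      _ = _ := by ring

/-- the CDF of the sum of n i.i.d. copies of A(s) converges pointwise, as
s → ∞, to the CDF of the sum of n i.i.d. copies of Ā. -/
theorem stmt_14 (m : ℝ) (hm : 0 < m) (M : ℕ) (hM : 0 < M) (n : ℕ) (hn : 0 < n) (y : ℝ) :
    Filter.Tendsto (fun s : ℝ =>
        ((Measure.pi fun _ : Fin n => nuA m M s) {a : Fin n → ℝ | ∑ k, a k < y}).toReal)
      Filter.atTop
      (nhds (((Measure.pi fun _ : Fin n => nuAbar m M)
        {a : Fin n → ℝ | ∑ k, a k < y}).toReal)) := by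
  have hfin : IsFiniteMeasure (nuAbar m M) := ⟨by rw [aux_nuAbar_univ m hm M hM]; simp⟩
  set S : Set (Fin n → ℝ) := {a : Fin n → ℝ | ∑ k, a k < y} with hSdef
  have hS : MeasurableSet S := measurableSet_lt (by fun_prop) measurable_const
  set c : ℝ → ENNReal := fun s => ENNReal.ofReal (Real.exp (m * ((2:ℝ) ^ M - 1) / s)) with hc
  have hct : ∀ s, c s ≠ ⊤ := fun s => ENNReal.ofReal_ne_top
  have hc0 : ∀ s, c s ≠ 0 := fun s => by simp [hc, Real.exp_pos]
  have hclim : Tendsto (fun s => c s ^ n) atTop (nhds 1) := by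
    have h1 : Tendsto (fun s : ℝ => m * ((2:ℝ) ^ M - 1) / s) atTop (nhds 0) :=
      tendsto_const_nhds.div_atTop tendsto_id
    have h2 := ENNReal.tendsto_ofReal ((Real.continuous_exp.tendsto 0).comp h1)
    have h3 := ENNReal.Tendsto.pow (n := n) h2
    simpa using h3
  have hPt : (Measure.pi fun _ : Fin n => nuAbar m M) S ≠ ⊤ := measure_ne_top _ _
  set P := (Measure.pi fun _ : Fin n => nuAbar m M) S
  have hfinA : ∀ s, 0 < s → IsFiniteMeasure (nuA m M s) := fun s hs =>
    have := Measure.smul_finite (nuAbar m M) (hct s)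
    isFiniteMeasure_of_le _ (aux_compare m hm M hM s hs).1
  refine (ENNReal.tendsto_toReal hPt).comp ?_
  have hlow : Tendsto (fun s => (c s ^ n)⁻¹ * P) atTop (nhds P) := by
    have := ENNReal.Tendsto.mul_const (b := P) (ENNReal.tendsto_inv_iff.2 hclim) (Or.inl (by simp))
    simpa using this
  have hup : Tendsto (fun s => c s ^ n * P) atTop (nhds P) := by
    have := ENNReal.Tendsto.mul_const (b := P) hclim (Or.inl (by simp))
    simpa using this
  refine tendsto_of_tendsto_of_tendsto_of_le_of_le' hlow hup ?_ ?_
  · filter_upwards [eventually_gt_atTop 0] with s hs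
    have := hfinA s hs
    have h := aux_pi_le (n := n) _ _ (c s) (hct s) (aux_compare m hm M hM s hs).2 S hS
    rw [mul_comm, ← div_eq_mul_inv]
    exact ENNReal.div_le_of_le_mul' h
  · filter_upwards [eventually_gt_atTop 0] with s hs
    have := hfinA s hs
    exact aux_pi_le (n := n) _ _ (c s) (hct s) (aux_compare m hm M hM s hs).1 S hS
end
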